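/- Fix Θ_* ∈ ℝ^{m×q}, μ > 0, 0 < β < 2, 0 < γ < √((2−β)/β), and suppose α := 2(1−γ) − γ(2−3β)²/(β(2−(1+γ²)β)) > 0. Let (φ_k)_{k≥0} be any sequence in ℝ^q and run the high-order tuner: N_k = max{μ, ‖φ_k‖²}, ε_{k+1} = (Θ̂_k − Θ_*)φ_k, Θ̄_k = Θ̂_k − (γβ/N_k) ε_{k+1} φ_k^⊤, Θ̂_{k+1} = Θ̄_k − β(Θ̄_k − Ξ̂_k), Ξ̂_{k+1} = Ξ̂_k − (γ/N_k)((Θ̂_{k+1} − Θ̂_k)φ_k + ε_{k+1})φ_k^⊤, with Ξ̂_0 = Θ̂_0. Then Σ_{k=0}^∞ ‖ε_{k+1}‖²/N_k ≤ (2+α) (‖Ξ̂_0 − Θ_*‖_F² + ‖Θ̂_0 − Ξ̂_0‖_F²) / (2γα(1−γβ)²); in particular lim_{k→∞} ‖ε_{k+1}‖²/N_k = 0. -/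

import Mathlib

open scoped BigOperators

/-!
Row by row, with errors `θ = Θ̂ - Θ_*` and `ξ = Ξ̂ - Θ_*`, the Lyapunov function is
`‖ξ‖² + ‖θ - ξ‖²`. Let `x` be the a posteriori error, `g` the component of the momentum `Θ̄ - Ξ̂`
along the regressor and `e` the prediction error. The decrease of the Lyapunov function in one step
is at least `1 / N` times a quadratic form in `x`, `g`, `e`, and completing the square bounds this
form below by `γ α x² + 2 γ β² g²`. Since `(1 - γ β ‖φ‖² / N) e = x + β g`, Young's inequality
turns that into a multiple of `e²`, and telescoping the decrease gives the sum.
-/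

namespace HighOrderTuner

/-- The constant `α` of the paper: `γ * α` is the coefficient of the squared a posteriori error
that remains once completing the square has absorbed its cross term with the momentum. The
quotient is junk when `β * (2 - (1 + γ ^ 2) * β) = 0`. -/
noncomputable def stabilityMargin (γ β : ℝ) : ℝ :=
  2 * (1 - γ) - γ * (2 - 3 * β) ^ 2 / (β * (2 - (1 + γ ^ 2) * β))

/-- The factor by which the normalized squared prediction error is multiplied in the one-step
decrease of the Lyapunov function. -/
noncomputable def decayRate (γ β : ℝ) : ℝ :=
  2 * γ * stabilityMargin γ β * (1 - γ * β) ^ 2 / (2 + stabilityMargin γ β)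

section Telescoping

variable {f V : ℕ → ℝ} {c : ℝ}

lemma sum_range_le_div_of_mul_le_sub (hc : 0 < c) (hV : ∀ k, 0 ≤ V k)
    (hstep : ∀ k, c * f k ≤ V k - V (k + 1)) (n : ℕ) :
    ∑ k ∈ Finset.range n, f k ≤ V 0 / c := by
  rw [le_div_iff₀' hc, Finset.mul_sum]
  calc ∑ k ∈ Finset.range n, c * f k
      ≤ ∑ k ∈ Finset.range n, (V k - V (k + 1)) := Finset.sum_le_sum fun k _ => hstep k
    _ = V 0 - V n := Finset.sum_range_sub' V n
    _ ≤ V 0 := sub_le_self _ (hV n)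

lemma summable_and_tsum_le_of_mul_le_sub (hc : 0 < c) (hf : ∀ k, 0 ≤ f k) (hV : ∀ k, 0 ≤ V k)
    (hstep : ∀ k, c * f k ≤ V k - V (k + 1)) :
    Summable f ∧ ∑' k, f k ≤ V 0 / c :=
  have hsum := sum_range_le_div_of_mul_le_sub hc hV hstep
  ⟨summable_of_sum_range_le hf hsum, Real.tsum_le_of_sum_range_le hf hsum⟩

end Telescoping

section Gains

variable {γ β : ℝ}

lemma one_add_sq_mul_lt_two_of_lt_sqrt (hβ : 0 < β) (hγ0 : 0 ≤ γ) (hγ : γ < √((2 - β) / β)) :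
    (1 + γ ^ 2) * β < 2 := by
  have h : γ ^ 2 * β < 2 - β := (lt_div_iff₀ hβ).1 ((Real.lt_sqrt hγ0).1 hγ)
  linarith

lemma mul_lt_one_of_one_add_sq_mul_lt_two (hβ : 0 < β) (hgain : (1 + γ ^ 2) * β < 2) :
    γ * β < 1 := by
  have hsq : (γ * β) ^ 2 < 1 := by
    calc (γ * β) ^ 2 = (1 + γ ^ 2) * β * β - β ^ 2 := by ring
      _ < 2 * β - β ^ 2 := by gcongr
      _ ≤ 1 := by linarith [sq_nonneg (β - 1)]
  exact lt_of_abs_lt ((sq_lt_one_iff_abs_lt_one _).1 hsq)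

lemma decayRate_pos (hβ : 0 < β) (hγ : 0 < γ) (hgain : (1 + γ ^ 2) * β < 2)
    (hα : 0 < stabilityMargin γ β) : 0 < decayRate γ β := by
  have hγβ : 0 < 1 - γ * β := sub_pos.2 (mul_lt_one_of_one_add_sq_mul_lt_two hβ hgain)
  unfold decayRate
  positivity

lemma stabilityMargin_mul_sq_le (hβ : 0 < β) (hgain : (1 + γ ^ 2) * β < 2) (x g : ℝ) :
    γ * stabilityMargin γ β * x ^ 2 ≤
      β * (2 - (1 + γ ^ 2) * β) * g ^ 2 - 2 * γ * (2 - 3 * β) * x * g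
        + 2 * γ * (1 - γ) * x ^ 2 := by
  unfold stabilityMargin
  have hA : 0 < β * (2 - (1 + γ ^ 2) * β) := mul_pos hβ (sub_pos.2 hgain)
  generalize β * (2 - (1 + γ ^ 2) * β) = A at hA ⊢
  have hsquare : 0 ≤ (A * g - γ * (2 - 3 * β) * x) ^ 2 / A := by positivity
  rw [← sub_nonneg]
  convert hsquare using 1
  field_simp
  ring

variable {s x g e : ℝ}

lemma stabilityMargin_mul_sq_add_le (hβ : 0 < β) (hgain : (1 + γ ^ 2) * β < 2)
    (hs0 : 0 ≤ s) (hs1 : s ≤ 1) (he : (1 - γ * β * s) * e = x + β * g) :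
    γ * stabilityMargin γ β * x ^ 2 + 2 * γ * β ^ 2 * g ^ 2 ≤
      β * (2 - β) * g ^ 2 + 2 * γ * (1 - γ * s) * x ^ 2 - 4 * γ * (1 - β) * x * g
        + 2 * γ * β * e * g + γ ^ 2 * β ^ 2 * s * e ^ 2 := by
  have hcross : 2 * γ * β * e * g =
      2 * γ * β * (x + β * g) * g + 2 * γ ^ 2 * β ^ 2 * s * e * g := by
    linear_combination (2 * γ * β * g) * he
  have : 0 ≤ 1 - s := sub_nonneg.2 hs1
  have heg : 0 ≤ γ ^ 2 * β ^ 2 * s * (e + g) ^ 2 := by positivity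
  have hg : 0 ≤ γ ^ 2 * β ^ 2 * (1 - s) * g ^ 2 := by positivity
  have hx : 0 ≤ γ ^ 2 * (1 - s) * x ^ 2 := by positivity
  linarith [stabilityMargin_mul_sq_le hβ hgain x g]

lemma one_sub_sq_mul_sq_le (hγβ0 : 0 ≤ γ * β) (hγβ1 : γ * β ≤ 1) (hs1 : s ≤ 1)
    (he : (1 - γ * β * s) * e = x + β * g) :
    (1 - γ * β) ^ 2 * e ^ 2 ≤ (x + β * g) ^ 2 := by
  rw [← he, mul_pow]
  have : 0 ≤ 1 - γ * β := sub_nonneg.2 hγβ1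
  have : γ * β * s ≤ γ * β := mul_le_of_le_one_right hγβ0 hs1
  gcongr

lemma two_mul_mul_add_sq_le (a x y : ℝ) :
    2 * a * (x + y) ^ 2 ≤ (2 + a) * (a * x ^ 2 + 2 * y ^ 2) := by
  linarith [sq_nonneg (a * x - 2 * y)]

lemma decayRate_mul_sq_le (hβ : 0 < β) (hγ : 0 ≤ γ) (hgain : (1 + γ ^ 2) * β < 2)
    (hα : 0 ≤ stabilityMargin γ β) (hs1 : s ≤ 1) (he : (1 - γ * β * s) * e = x + β * g) :
    decayRate γ β * e ^ 2 ≤ γ * stabilityMargin γ β * x ^ 2 + 2 * γ * β ^ 2 * g ^ 2 := by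
  have hγβ := (mul_lt_one_of_one_add_sq_mul_lt_two hβ hgain).le
  unfold decayRate
  generalize stabilityMargin γ β = α at hα ⊢
  rw [div_mul_eq_mul_div, div_le_iff₀' (by positivity)]
  calc 2 * γ * α * (1 - γ * β) ^ 2 * e ^ 2
      = 2 * γ * α * ((1 - γ * β) ^ 2 * e ^ 2) := by ring
    _ ≤ 2 * γ * α * (x + β * g) ^ 2 := by
        gcongr
        exact one_sub_sq_mul_sq_le (by positivity) hγβ hs1 he
    _ = γ * (2 * α * (x + β * g) ^ 2) := by ring
    _ ≤ γ * ((2 + α) * (α * x ^ 2 + 2 * (β * g) ^ 2)) :=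
        mul_le_mul_of_nonneg_left (two_mul_mul_add_sq_le α x (β * g)) hγ
    _ = (2 + α) * (γ * α * x ^ 2 + 2 * γ * β ^ 2 * g ^ 2) := by ring

end Gains

section Step

open scoped InnerProductSpace

variable {E : Type*} [NormedAddCommGroup E] [InnerProductSpace ℝ E]

/-- One step of the high-order tuner with a scalar output, in error coordinates: `θ`, `ξ` and `θbar`
stand for the errors `Θ̂ₖ - Θ_*`, `Ξ̂ₖ - Θ_*` and `Θ̄ₖ - Θ_*`, and `θ'`, `ξ'` for the first two at
time `k + 1`. A matrix-valued tuner performs such a step in each of its rows. -/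
structure IsTunerStep (γ β N : ℝ) (φ θ ξ θbar θ' ξ' : E) : Prop where
  intermediate_eq : θbar = θ - (γ * β / N * ⟪θ, φ⟫_ℝ) • φ
  param_eq : θ' = θbar - β • (θbar - ξ)
  aux_eq : ξ' = ξ - (γ / N * ⟪θ', φ⟫_ℝ) • φ

namespace IsTunerStep

variable {γ β N : ℝ} {φ θ ξ θbar θ' ξ' : E}

lemma one_sub_mul_inner_eq (h : IsTunerStep γ β N φ θ ξ θbar θ' ξ') :
    (1 - γ * β * (‖φ‖ ^ 2 / N)) * ⟪θ, φ⟫_ℝ = ⟪θ', φ⟫_ℝ + β * ⟪θbar - ξ, φ⟫_ℝ := by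
  have hbar : ⟪θbar, φ⟫_ℝ = ⟪θ, φ⟫_ℝ - γ * β / N * ⟪θ, φ⟫_ℝ * ‖φ‖ ^ 2 := by
    conv_lhs => rw [h.intermediate_eq, inner_sub_left, real_inner_smul_left,
      real_inner_self_eq_norm_sq]
  have hparam : ⟪θ', φ⟫_ℝ = ⟪θbar, φ⟫_ℝ - β * ⟪θbar - ξ, φ⟫_ℝ := by
    rw [h.param_eq, inner_sub_left, real_inner_smul_left]
  linear_combination -hbar - hparam

lemma lyapunov_sub_eq (h : IsTunerStep γ β N φ θ ξ θbar θ' ξ') (hN : N ≠ 0) :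
    (‖ξ‖ ^ 2 + ‖θ - ξ‖ ^ 2) - (‖ξ'‖ ^ 2 + ‖θ' - ξ'‖ ^ 2) =
      β * (2 - β) * ‖θbar - ξ‖ ^ 2 +
        (2 * γ * (1 - γ * (‖φ‖ ^ 2 / N)) * ⟪θ', φ⟫_ℝ ^ 2
          - 4 * γ * (1 - β) * ⟪θ', φ⟫_ℝ * ⟪θbar - ξ, φ⟫_ℝ
          + 2 * γ * β * ⟪θ, φ⟫_ℝ * ⟪θbar - ξ, φ⟫_ℝ
          + γ ^ 2 * β ^ 2 * (‖φ‖ ^ 2 / N) * ⟪θ, φ⟫_ℝ ^ 2) / N := by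
  have hθξ : θ - ξ = (θbar - ξ) + (γ * β / N * ⟪θ, φ⟫_ℝ) • φ := by
    rw [h.intermediate_eq]; abel
  have hθξ' : θ' - ξ' = (1 - β) • (θbar - ξ) + (γ / N * ⟪θ', φ⟫_ℝ) • φ := by
    rw [h.aux_eq]
    nth_rw 1 [h.param_eq]
    module
  have hξφ : ⟪ξ, φ⟫_ℝ = ⟪θ', φ⟫_ℝ - (1 - β) * ⟪θbar - ξ, φ⟫_ℝ := by
    rw [h.param_eq]
    simp only [inner_sub_left, real_inner_smul_left]
    ring
  rw [hθξ, hθξ', h.aux_eq, norm_sub_sq_real, norm_add_sq_real, norm_add_sq_real]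
  simp only [real_inner_smul_left, real_inner_smul_right, norm_smul, mul_pow, Real.norm_eq_abs,
    sq_abs, hξφ]
  field_simp
  ring

lemma decayRate_mul_le (h : IsTunerStep γ β N φ θ ξ θbar θ' ξ') (hβ : 0 < β) (hγ : 0 ≤ γ)
    (hgain : (1 + γ ^ 2) * β < 2) (hα : 0 ≤ stabilityMargin γ β) (hN : 0 < N)
    (hφ : ‖φ‖ ^ 2 ≤ N) :
    decayRate γ β * (⟪θ, φ⟫_ℝ ^ 2 / N) ≤
      (‖ξ‖ ^ 2 + ‖θ - ξ‖ ^ 2) - (‖ξ'‖ ^ 2 + ‖θ' - ξ'‖ ^ 2) := by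
  have hs1 : ‖φ‖ ^ 2 / N ≤ 1 := (div_le_one hN).2 hφ
  have hmomentum : ⟪θbar - ξ, φ⟫_ℝ ^ 2 / N ≤ ‖θbar - ξ‖ ^ 2 := by
    rw [div_le_iff₀ hN]
    calc ⟪θbar - ξ, φ⟫_ℝ ^ 2 ≤ (‖θbar - ξ‖ * ‖φ‖) ^ 2 :=
          sq_le_sq' (neg_le_of_abs_le (abs_real_inner_le_norm _ _)) (real_inner_le_norm _ _)
      _ ≤ ‖θbar - ξ‖ ^ 2 * N := by rw [mul_pow]; gcongr
  have hβ2 : 0 ≤ 2 - β := by linarith [mul_nonneg (sq_nonneg γ) hβ.le]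
  have hquad := (decayRate_mul_sq_le hβ hγ hgain hα hs1 h.one_sub_mul_inner_eq).trans
    (stabilityMargin_mul_sq_add_le hβ hgain (by positivity) hs1 h.one_sub_mul_inner_eq)
  rw [h.lyapunov_sub_eq hN.ne', ← mul_div_assoc]
  refine (div_le_div_of_nonneg_right hquad hN.le).trans ?_
  linear_combination β * (2 - β) * hmomentum

end IsTunerStep

end Step

section Matrix

variable {m n : Type*} [Fintype n]

lemma inner_toLp_row (M : Matrix m n ℝ) (φ : n → ℝ) (i : m) :
    inner ℝ (WithLp.toLp 2 (M i)) (WithLp.toLp 2 φ) = M.mulVec φ i := by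
  rw [EuclideanSpace.inner_toLp_toLp, star_trivial, dotProduct_comm]
  rfl

variable {γ β N : ℝ} {φ : n → ℝ} {ε : m → ℝ} {Θstar Θ Ξ Θbar Θ' Ξ' : Matrix m n ℝ}

lemma isTunerStep_row (hε : ε = (Θ - Θstar).mulVec φ)
    (hΘbar : Θbar = Θ - (γ * β / N) • Matrix.vecMulVec ε φ)
    (hΘ : Θ' = Θbar - β • (Θbar - Ξ))
    (hΞ : Ξ' = Ξ - (γ / N) • Matrix.vecMulVec ((Θ' - Θ).mulVec φ + ε) φ) (i : m) :
    IsTunerStep γ β N (WithLp.toLp 2 φ) (WithLp.toLp 2 ((Θ - Θstar) i))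
      (WithLp.toLp 2 ((Ξ - Θstar) i)) (WithLp.toLp 2 ((Θbar - Θstar) i))
      (WithLp.toLp 2 ((Θ' - Θstar) i)) (WithLp.toLp 2 ((Ξ' - Θstar) i)) where
  intermediate_eq := by
    ext j
    rw [inner_toLp_row, ← hε]
    simp only [hΘbar, Matrix.sub_apply, Matrix.smul_apply, Matrix.vecMulVec_apply, smul_eq_mul,
      PiLp.sub_apply, PiLp.smul_apply]
    ring
  param_eq := by
    ext j
    simp only [hΘ, Matrix.sub_apply, Matrix.smul_apply, smul_eq_mul, PiLp.sub_apply,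
      PiLp.smul_apply]
    ring
  aux_eq := by
    have hε' : (Θ' - Θ).mulVec φ + ε = (Θ' - Θstar).mulVec φ := by
      rw [hε, ← Matrix.add_mulVec, sub_add_sub_cancel]
    ext j
    rw [inner_toLp_row, ← hε']
    simp only [hΞ, Matrix.sub_apply, Matrix.smul_apply, Matrix.vecMulVec_apply, smul_eq_mul,
      PiLp.sub_apply, PiLp.smul_apply]
    ring

variable [Fintype m]

/-- The Lyapunov function `‖Ξ - Θ_*‖_F² + ‖Θ - Ξ‖_F²` of the tuner, with the squared Frobenius norms
written out in coordinates. -/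
def lyapunov (Θstar Θ Ξ : Matrix m n ℝ) : ℝ :=
  (∑ i, ∑ j, (Ξ - Θstar) i j ^ 2) + ∑ i, ∑ j, (Θ - Ξ) i j ^ 2

lemma lyapunov_nonneg (Θstar Θ Ξ : Matrix m n ℝ) : 0 ≤ lyapunov Θstar Θ Ξ := by
  unfold lyapunov
  positivity

lemma lyapunov_eq_sum_norm_sq (Θstar Θ Ξ : Matrix m n ℝ) :
    lyapunov Θstar Θ Ξ = ∑ i, (‖WithLp.toLp 2 ((Ξ - Θstar) i)‖ ^ 2 +
      ‖WithLp.toLp 2 ((Θ - Θstar) i) - WithLp.toLp 2 ((Ξ - Θstar) i)‖ ^ 2) := by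
  simp [lyapunov, EuclideanSpace.real_norm_sq_eq, Finset.sum_add_distrib]

lemma decayRate_mul_le_lyapunov_sub (hβ : 0 < β) (hγ : 0 ≤ γ) (hgain : (1 + γ ^ 2) * β < 2)
    (hα : 0 ≤ stabilityMargin γ β) (hN : 0 < N) (hφ : ∑ j, φ j ^ 2 ≤ N)
    (hε : ε = (Θ - Θstar).mulVec φ)
    (hΘbar : Θbar = Θ - (γ * β / N) • Matrix.vecMulVec ε φ)
    (hΘ : Θ' = Θbar - β • (Θbar - Ξ))
    (hΞ : Ξ' = Ξ - (γ / N) • Matrix.vecMulVec ((Θ' - Θ).mulVec φ + ε) φ) :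
    decayRate γ β * ((∑ i, ε i ^ 2) / N) ≤ lyapunov Θstar Θ Ξ - lyapunov Θstar Θ' Ξ' := by
  rw [lyapunov_eq_sum_norm_sq, lyapunov_eq_sum_norm_sq, ← Finset.sum_sub_distrib,
    Finset.sum_div, Finset.mul_sum]
  refine Finset.sum_le_sum fun i _ => ?_
  have hφ' : ‖WithLp.toLp 2 φ‖ ^ 2 ≤ N := by rwa [EuclideanSpace.real_norm_sq_eq]
  have hrow := (isTunerStep_row hε hΘbar hΘ hΞ i).decayRate_mul_le hβ hγ hgain hα hN hφ'
  rwa [inner_toLp_row, ← hε] at hrow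

end Matrix

end HighOrderTuner

open HighOrderTuner in
theorem hot_prediction_error_summable_general {m n : Type*} [Fintype m] [Fintype n]
    (Θstar : Matrix m n ℝ) (γ β : ℝ) (hβ : 0 < β) (hγ : 0 < γ) (hgain : (1 + γ ^ 2) * β < 2)
    (hα : 0 < 2 * (1 - γ) - γ * (2 - 3 * β) ^ 2 / (β * (2 - (1 + γ ^ 2) * β)))
    (φ : ℕ → n → ℝ) (Θhat Ξhat Θbar : ℕ → Matrix m n ℝ)
    (N : ℕ → ℝ) (hN : ∀ k, 0 < N k) (hφ : ∀ k, ∑ j, φ k j ^ 2 ≤ N k)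
    (ε : ℕ → m → ℝ) (hε : ∀ k, ε (k + 1) = (Θhat k - Θstar).mulVec (φ k))
    (hΘbar : ∀ k, Θbar k
      = Θhat k - (γ * β / N k) • Matrix.vecMulVec (ε (k + 1)) (φ k))
    (hΘ : ∀ k, Θhat (k + 1) = Θbar k - β • (Θbar k - Ξhat k))
    (hΞ : ∀ k, Ξhat (k + 1) = Ξhat k - (γ / N k) • Matrix.vecMulVec
      ((Θhat (k + 1) - Θhat k).mulVec (φ k) + ε (k + 1)) (φ k)) :
    let α := 2 * (1 - γ) - γ * (2 - 3 * β) ^ 2 / (β * (2 - (1 + γ ^ 2) * β))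
    Summable (fun k => (∑ i, ε (k + 1) i ^ 2) / N k) ∧
      (∑' k, (∑ i, ε (k + 1) i ^ 2) / N k)
        ≤ (2 + α) * ((∑ i, ∑ j, (Ξhat 0 - Θstar) i j ^ 2)
              + ∑ i, ∑ j, (Θhat 0 - Ξhat 0) i j ^ 2)
          / (2 * γ * α * (1 - γ * β) ^ 2) ∧
      Filter.Tendsto (fun k => (∑ i, ε (k + 1) i ^ 2) / N k)
        Filter.atTop (nhds 0) := by
  intro α
  have hstep (k : ℕ) : decayRate γ β * ((∑ i, ε (k + 1) i ^ 2) / N k) ≤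
      lyapunov Θstar (Θhat k) (Ξhat k) - lyapunov Θstar (Θhat (k + 1)) (Ξhat (k + 1)) :=
    decayRate_mul_le_lyapunov_sub hβ hγ.le hgain hα.le (hN k) (hφ k) (hε k) (hΘbar k) (hΘ k) (hΞ k)
  have hnonneg (k : ℕ) : 0 ≤ (∑ i, ε (k + 1) i ^ 2) / N k :=
    div_nonneg (Finset.sum_nonneg fun i _ => sq_nonneg _) (hN k).le
  obtain ⟨hsummable, htsum⟩ := summable_and_tsum_le_of_mul_le_sub
    (decayRate_pos hβ hγ hgain hα) hnonneg (fun k => lyapunov_nonneg _ _ _) hstep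
  refine ⟨hsummable, htsum.trans_eq ?_, hsummable.tendsto_atTop_zero⟩
  rw [decayRate, div_div_eq_mul_div, mul_comm (lyapunov _ _ _)]
  rfl

/-- along the high-order tuner, the normalized squared
    prediction errors are summable with
    Σ ‖ε_{k+1}‖²/N_k ≤ (2+α)V₀/(2γα(1−γβ)²); in particular they tend to 0. -/
theorem hot_prediction_error_summable {m q : ℕ}
    (Θstar : Matrix (Fin m) (Fin q) ℝ) (μ γ β : ℝ)
    (hμ : 0 < μ) (hβ0 : 0 < β) (hβ2 : β < 2)
    (hγ0 : 0 < γ) (hγ : γ < Real.sqrt ((2 - β) / β))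
    (hα : 0 < 2 * (1 - γ) - γ * (2 - 3 * β) ^ 2 / (β * (2 - (1 + γ ^ 2) * β)))
    (φ : ℕ → Fin q → ℝ)
    (Θhat Ξhat Θbar : ℕ → Matrix (Fin m) (Fin q) ℝ)
    (N : ℕ → ℝ) (hN : ∀ k, N k = max μ (∑ j, φ k j ^ 2))
    (ε : ℕ → Fin m → ℝ) (hε : ∀ k, ε (k + 1) = (Θhat k - Θstar).mulVec (φ k))
    (hΘbar : ∀ k, Θbar k
      = Θhat k - (γ * β / N k) • Matrix.vecMulVec (ε (k + 1)) (φ k))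
    (hΘ : ∀ k, Θhat (k + 1) = Θbar k - β • (Θbar k - Ξhat k))
    (hΞ : ∀ k, Ξhat (k + 1) = Ξhat k - (γ / N k) • Matrix.vecMulVec
      ((Θhat (k + 1) - Θhat k).mulVec (φ k) + ε (k + 1)) (φ k))
    (hinit : Ξhat 0 = Θhat 0) :
    let α := 2 * (1 - γ) - γ * (2 - 3 * β) ^ 2 / (β * (2 - (1 + γ ^ 2) * β))
    Summable (fun k => (∑ i, ε (k + 1) i ^ 2) / N k) ∧
      (∑' k, (∑ i, ε (k + 1) i ^ 2) / N k)
        ≤ (2 + α) * ((∑ i, ∑ j, (Ξhat 0 - Θstar) i j ^ 2)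
              + ∑ i, ∑ j, (Θhat 0 - Ξhat 0) i j ^ 2)
          / (2 * γ * α * (1 - γ * β) ^ 2) ∧
      Filter.Tendsto (fun k => (∑ i, ε (k + 1) i ^ 2) / N k)
        Filter.atTop (nhds 0) :=
  hot_prediction_error_summable_general Θstar γ β hβ0 hγ0
    (HighOrderTuner.one_add_sq_mul_lt_two_of_lt_sqrt hβ0 hγ0.le hγ) hα φ Θhat Ξhat Θbar N
    (fun k => hN k ▸ lt_max_of_lt_left hμ) (fun k => hN k ▸ le_max_right _ _) ε hε hΘbar hΘ hΞ
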